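/- For every real A ≥ 5 there exists C = C(A) > 0 such that for all 0 < δ < 1: ∫_{ℝ³} G(τ₁, τ₂, τ₃, τ₄) · (1 + δ m(τ))^{−A} · (1 + m(τ))^{−7/2} · ∏_{1 ≤ i < j ≤ 4} (1 + |τ_i − τ_j|) dτ₁ dτ₂ dτ₃ ≤ C · δ^{−4}, where τ₄ := −τ₁ − τ₂ − τ₃ and m(τ) := max(|τ₁|, |τ₂|, |τ₃|, |τ₄|). -/

import Mathlib

/-!
Write `m` for the maximum of the `|τ i|`, `i ≤ 4`. The integrand is bounded pointwise. All six
factors `1 + |τ i - τ j|` lie in `[1, 2 (1 + m)]`. If `τ k` is the largest (or smallest)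
coordinate, the corresponding product in `Gfun` is `∏ j ≠ k, (1 + |τ k - τ j|) ^ (-1/2)`, so it
turns three of the six factors into their square roots (`gfun_term_le`). Hence `Gfun` times the
product of the six factors is `O((1 + m) ^ (9/2))` (`gfun_mul_le`), and the integrand is
`O((1 + m) (1 + δ m) ^ (-A))`. Since `δ < 1` and `A ≥ 5`, this is
`O(δ⁻¹ (1 + δ m) ^ (-4)) = O(δ⁻¹ (1 + ‖δ τ‖) ^ (-4))`. As `4 > 3`, the function
`(1 + ‖x‖) ^ (-4)` is integrable on `ℝ³`, and rescaling by `δ` contributes the remaining `δ⁻³`.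
-/

open MeasureTheory

/-- The function `G(a)` from the paper. -/
noncomputable def Gfun (n : ℕ) (a : Fin n → ℝ) : ℝ :=
  (∏ j, (1 + (⨆ i, a i) - a j) ^ (-(1 / 2 : ℝ))) +
  (∏ j, (1 + |(⨅ i, a i) - a j|) ^ (-(1 / 2 : ℝ)))

/-- The product of the six factors `1 + |a i - a j|`, `i < j`. -/
noncomputable def diffProd (a : Fin 4 → ℝ) : ℝ :=
  (1 + |a 0 - a 1|) * (1 + |a 0 - a 2|) * (1 + |a 0 - a 3|) *
    (1 + |a 1 - a 2|) * (1 + |a 1 - a 3|) * (1 + |a 2 - a 3|)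

lemma rpow_neg_half_mul_le {x K : ℝ} (hx : 1 ≤ x) (hK : x ≤ K) :
    x ^ (-(1 / 2 : ℝ)) * x ≤ K ^ (1 / 2 : ℝ) := by
  have h0 : 0 < x := by linarith
  have h : x ^ (-(1 / 2 : ℝ)) * x = x ^ (1 / 2 : ℝ) := by
    nth_rewrite 2 [← Real.rpow_one x]
    rw [← Real.rpow_add h0]
    norm_num
  rw [h]
  exact Real.rpow_le_rpow h0.le hK (by norm_num)

lemma six_factors_le {x y z u v w K : ℝ} (hx : 1 ≤ x) (hy : 1 ≤ y) (hz : 1 ≤ z)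
    (hu : 1 ≤ u) (hv : 1 ≤ v) (hw : 1 ≤ w) (hxK : x ≤ K) (hyK : y ≤ K) (hzK : z ≤ K)
    (huK : u ≤ K) (hvK : v ≤ K) (hwK : w ≤ K) :
    (x ^ (-(1 / 2 : ℝ)) * y ^ (-(1 / 2 : ℝ)) * z ^ (-(1 / 2 : ℝ))) * (x * y * z * u * v * w)
      ≤ K ^ (9 / 2 : ℝ) := by
  have hK : 0 < K := by linarith
  have e : K ^ (9 / 2 : ℝ) =
      K ^ (1 / 2 : ℝ) * K ^ (1 / 2 : ℝ) * K ^ (1 / 2 : ℝ) * K * K * K := by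
    rw [← Real.rpow_add hK, ← Real.rpow_add hK, ← Real.rpow_add_one hK.ne',
      ← Real.rpow_add_one hK.ne', ← Real.rpow_add_one hK.ne']
    norm_num
  have e2 : (x ^ (-(1 / 2 : ℝ)) * y ^ (-(1 / 2 : ℝ)) * z ^ (-(1 / 2 : ℝ))) *
        (x * y * z * u * v * w) =
      (x ^ (-(1 / 2 : ℝ)) * x) * (y ^ (-(1 / 2 : ℝ)) * y) * (z ^ (-(1 / 2 : ℝ)) * z)
        * u * v * w := by ring
  rw [e, e2]
  have := rpow_neg_half_mul_le hx hxK
  have := rpow_neg_half_mul_le hy hyK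
  have := rpow_neg_half_mul_le hz hzK
  gcongr

/-- Whichever coordinate `a k` is extremal, the three factors `1 + |a k - a j|`, `j ≠ k`, of
`diffProd a` are replaced by their square roots, so the total degree drops from `6` to `9/2`. -/
lemma gfun_term_le {a : Fin 4 → ℝ} {K : ℝ} (hK : ∀ i j, 1 + |a i - a j| ≤ K) (k : Fin 4) :
    (∏ j, (1 + |a k - a j|) ^ (-(1 / 2 : ℝ))) * diffProd a ≤ K ^ (9 / 2 : ℝ) := by
  have h1 : ∀ i j, 1 ≤ 1 + |a i - a j| := fun i j => by linarith [abs_nonneg (a i - a j)]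
  have c := fun i j => abs_sub_comm (a i) (a j)
  fin_cases k
  · have := six_factors_le (h1 0 1) (h1 0 2) (h1 0 3) (h1 1 2) (h1 1 3) (h1 2 3)
      (hK 0 1) (hK 0 2) (hK 0 3) (hK 1 2) (hK 1 3) (hK 2 3)
    refine le_trans (le_of_eq ?_) this
    simp [Fin.prod_univ_four, diffProd]
  · have := six_factors_le (h1 0 1) (h1 1 2) (h1 1 3) (h1 0 2) (h1 0 3) (h1 2 3)
      (hK 0 1) (hK 1 2) (hK 1 3) (hK 0 2) (hK 0 3) (hK 2 3)
    refine le_trans (le_of_eq ?_) this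
    simp [Fin.prod_univ_four, c 1 0, -mul_eq_mul_left_iff, -mul_eq_mul_right_iff]
    rw [diffProd]
    ring
  · have := six_factors_le (h1 0 2) (h1 1 2) (h1 2 3) (h1 0 1) (h1 0 3) (h1 1 3)
      (hK 0 2) (hK 1 2) (hK 2 3) (hK 0 1) (hK 0 3) (hK 1 3)
    refine le_trans (le_of_eq ?_) this
    simp [Fin.prod_univ_four, c 2 0, c 2 1, -mul_eq_mul_left_iff, -mul_eq_mul_right_iff]
    rw [diffProd]
    ring
  · have := six_factors_le (h1 0 3) (h1 1 3) (h1 2 3) (h1 0 1) (h1 0 2) (h1 1 2)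
      (hK 0 3) (hK 1 3) (hK 2 3) (hK 0 1) (hK 0 2) (hK 1 2)
    refine le_trans (le_of_eq ?_) this
    simp [Fin.prod_univ_four, c 3 0, c 3 1, c 3 2, -mul_eq_mul_left_iff, -mul_eq_mul_right_iff]
    rw [diffProd]
    ring

lemma gfun_mul_le {a : Fin 4 → ℝ} {K : ℝ} (hK : ∀ i j, 1 + |a i - a j| ≤ K) :
    Gfun 4 a * diffProd a ≤ 2 * K ^ (9 / 2 : ℝ) := by
  obtain ⟨k, hk⟩ := exists_eq_ciSup_of_finite (f := a)
  obtain ⟨l, hl⟩ := exists_eq_ciInf_of_finite (f := a)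
  have hmax : ∀ j, 1 + (⨆ i, a i) - a j = 1 + |a k - a j| := by
    intro j
    have : a j ≤ a k := hk ▸ le_ciSup (Set.finite_range a).bddAbove j
    rw [abs_of_nonneg (by linarith), ← hk]
    ring
  have h := add_le_add (gfun_term_le hK k) (gfun_term_le hK l)
  simp only [Gfun, hmax, ← hl]
  linarith

/-- The pointwise bound for the integrand; here `m` is any bound for the `|a i|` and `r ≤ m`. -/
lemma integrand_le {A δ m r : ℝ} (hA : 5 ≤ A) (hδ : 0 < δ) (hδ1 : δ < 1) (hr : 0 ≤ r)
    (hrm : r ≤ m) {a : Fin 4 → ℝ} (ha : ∀ i, |a i| ≤ m) :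
    Gfun 4 a * (1 + δ * m) ^ (-A) * (1 + m) ^ (-(7 : ℝ) / 2) * diffProd a
      ≤ 64 * δ⁻¹ * (1 + δ * r) ^ (-(4 : ℝ)) := by
  have hm : 0 ≤ m := hr.trans hrm
  have hM : 0 < 1 + m := by linarith
  have hD : 1 ≤ 1 + δ * m := by nlinarith
  have hD0 : 0 < 1 + δ * m := by linarith
  have hK : ∀ i j, 1 + |a i - a j| ≤ 2 * (1 + m) := fun i j => by
    linarith [abs_sub (a i) (a j), ha i, ha j]
  have h2 : (2 : ℝ) ^ (9 / 2 : ℝ) ≤ 32 := by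
    calc (2 : ℝ) ^ (9 / 2 : ℝ) ≤ 2 ^ (5 : ℝ) :=
          Real.rpow_le_rpow_of_exponent_le (by norm_num) (by norm_num)
      _ = 32 := by norm_num
  have hG : Gfun 4 a * diffProd a ≤ 64 * (1 + m) ^ (9 / 2 : ℝ) := by
    refine (gfun_mul_le hK).trans ?_
    rw [Real.mul_rpow (by norm_num) hM.le]
    nlinarith [Real.rpow_nonneg hM.le (9 / 2 : ℝ)]
  have hpow : (1 + m) ^ (9 / 2 : ℝ) * (1 + m) ^ (-(7 : ℝ) / 2) = 1 + m := by
    rw [← Real.rpow_add hM]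
    norm_num
  have hm1 : 1 + m ≤ δ⁻¹ * (1 + δ * m) := by
    have : 1 ≤ δ⁻¹ := (one_le_inv₀ hδ).2 hδ1.le
    have e : δ⁻¹ * (1 + δ * m) = δ⁻¹ + m := by field_simp
    linarith
  have hdec : (1 + δ * m) * (1 + δ * m) ^ (-A) ≤ (1 + δ * r) ^ (-(4 : ℝ)) := by
    calc (1 + δ * m) * (1 + δ * m) ^ (-A)
        ≤ (1 + δ * m) * (1 + δ * m) ^ (-(5 : ℝ)) := by
          gcongr
      _ = (1 + δ * m) ^ (-(4 : ℝ)) := by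
          nth_rewrite 1 [← Real.rpow_one (1 + δ * m)]
          rw [← Real.rpow_add hD0]
          norm_num
      _ ≤ (1 + δ * r) ^ (-(4 : ℝ)) :=
          Real.rpow_le_rpow_of_nonpos (by positivity) (by gcongr) (by norm_num)
  calc Gfun 4 a * (1 + δ * m) ^ (-A) * (1 + m) ^ (-(7 : ℝ) / 2) * diffProd a
      = (Gfun 4 a * diffProd a) * ((1 + δ * m) ^ (-A) * (1 + m) ^ (-(7 : ℝ) / 2)) := by ring
    _ ≤ (64 * (1 + m) ^ (9 / 2 : ℝ)) * ((1 + δ * m) ^ (-A) * (1 + m) ^ (-(7 : ℝ) / 2)) := by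
        gcongr
    _ = 64 * (((1 + m) ^ (9 / 2 : ℝ) * (1 + m) ^ (-(7 : ℝ) / 2)) * (1 + δ * m) ^ (-A)) := by
        ring
    _ = 64 * ((1 + m) * (1 + δ * m) ^ (-A)) := by rw [hpow]
    _ ≤ 64 * ((δ⁻¹ * (1 + δ * m)) * (1 + δ * m) ^ (-A)) := by gcongr
    _ = 64 * δ⁻¹ * ((1 + δ * m) * (1 + δ * m) ^ (-A)) := by ring
    _ ≤ 64 * δ⁻¹ * (1 + δ * r) ^ (-(4 : ℝ)) := by gcongr

lemma lintegral_majorant {δ : ℝ} (hδ : 0 < δ) :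
    ∫⁻ τ : Fin 3 → ℝ, ENNReal.ofReal (64 * δ⁻¹ * (1 + δ * ‖τ‖) ^ (-(4 : ℝ))) =
      ENNReal.ofReal (64 * (∫ x : Fin 3 → ℝ, (1 + ‖x‖) ^ (-(4 : ℝ))) * δ ^ (-(4 : ℝ))) := by
  have hint : Integrable (fun x : Fin 3 → ℝ => (1 + ‖x‖) ^ (-(4 : ℝ))) :=
    integrable_one_add_norm (by norm_num)
  have hn : ∀ τ : Fin 3 → ℝ, 1 + δ * ‖τ‖ = 1 + ‖δ • τ‖ := fun τ => by
    rw [norm_smul, Real.norm_of_nonneg hδ.le]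
  simp only [hn]
  rw [← ofReal_integral_eq_lintegral_ofReal ((hint.comp_smul hδ.ne').const_mul _)
    (Filter.Eventually.of_forall fun τ => by positivity)]
  rw [integral_const_mul, Measure.integral_comp_smul volume
    (fun x : Fin 3 → ℝ => (1 + ‖x‖) ^ (-(4 : ℝ))) δ]
  congr 1
  have e : δ ^ (-(4 : ℝ)) = δ⁻¹ * (δ ^ 3)⁻¹ := by
    rw [Real.rpow_neg hδ.le]
    norm_num
    ring
  rw [e, Module.finrank_fin_fun, abs_of_pos (by positivity), smul_eq_mul]
  ring

theorem statement17 (A : ℝ) (hA : 5 ≤ A) :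
    ∃ C : ℝ, 0 < C ∧ ∀ δ : ℝ, 0 < δ → δ < 1 →
      (∫⁻ τ : Fin 3 → ℝ, ENNReal.ofReal
          (Gfun 4 ![τ 0, τ 1, τ 2, -τ 0 - τ 1 - τ 2] *
            (1 + δ * max |τ 0| (max |τ 1| (max |τ 2| |(-τ 0 - τ 1 - τ 2 : ℝ)|))) ^ (-A) *
            (1 + max |τ 0| (max |τ 1| (max |τ 2| |(-τ 0 - τ 1 - τ 2 : ℝ)|))) ^ (-(7 : ℝ) / 2) *
            ((1 + |τ 0 - τ 1|) * (1 + |τ 0 - τ 2|) * (1 + |τ 0 - (-τ 0 - τ 1 - τ 2)|) *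
              (1 + |τ 1 - τ 2|) * (1 + |τ 1 - (-τ 0 - τ 1 - τ 2)|) *
              (1 + |τ 2 - (-τ 0 - τ 1 - τ 2)|)))) ≤
        ENNReal.ofReal (C * δ ^ (-(4 : ℝ))) := by
  have hI : 0 ≤ ∫ x : Fin 3 → ℝ, (1 + ‖x‖) ^ (-(4 : ℝ)) :=
    integral_nonneg fun x => by positivity
  -- The summand `1` only serves to make the constant visibly positive.
  refine ⟨64 * (∫ x : Fin 3 → ℝ, (1 + ‖x‖) ^ (-(4 : ℝ))) + 1, by positivity, ?_⟩
  intro δ hδ hδ1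
  calc _ ≤ ∫⁻ τ : Fin 3 → ℝ, ENNReal.ofReal (64 * δ⁻¹ * (1 + δ * ‖τ‖) ^ (-(4 : ℝ))) := by
        refine lintegral_mono fun τ => ENNReal.ofReal_le_ofReal ?_
        refine integrand_le (a := ![τ 0, τ 1, τ 2, -τ 0 - τ 1 - τ 2]) hA hδ hδ1
          (norm_nonneg τ) ?_ ?_
        · refine (pi_norm_le_iff_of_nonneg (by positivity)).2 fun i => ?_
          fin_cases i <;> simp
        · intro i
          fin_cases i <;> simp
    _ = _ := lintegral_majorant hδ
    _ ≤ _ := by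
        refine ENNReal.ofReal_le_ofReal ?_
        gcongr
        linarith
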